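/- Let 1 ≤ d ≤ n and λ ∈ [0,1], and let D_λ : M_n(ℂ) → M_n(ℂ) be the quantum depolarizing channel D_λ(ρ) = λρ + (1−λ)(tr(ρ)/n) I_n. Set μ = λ + (1−λ)/(nd) and let H(μ) = −μ log₂ μ − (1−μ) log₂(1−μ) be the binary Shannon entropy. Then λ log₂(nd) − H(μ) ≤ C_prod^d(D_λ); in particular λ log₂(nd) − 1 ≤ C_prod^d(D_λ). -/

import Mathlib

noncomputable section

open scoped BigOperators ComplexOrder
open Matrix

/-- The von Neumann entropy (base 2) `S(ρ) = −tr(ρ log₂ ρ)`, computed via the eigenvalues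
(with the convention `0 log 0 = 0`). -/
def entropy2 {ι : Type*} [Fintype ι] [DecidableEq ι] (ρ : Matrix ι ι ℂ) : ℝ :=
  if h : ρ.IsHermitian then -∑ i, h.eigenvalues i * Real.logb 2 (h.eigenvalues i) else 0

/-- The partial trace over the first tensor factor, `(tr ⊗ id)`. -/
def ptrace1 {ι κ : Type*} [Fintype ι] (X : Matrix (ι × κ) (ι × κ) ℂ) : Matrix κ κ ℂ :=
  fun u v => ∑ a : ι, X (a, u) (a, v)

/-- The partial trace over the second tensor factor, `(id ⊗ tr)`. -/
def ptrace2 {ι κ : Type*} [Fintype κ] (X : Matrix (ι × κ) (ι × κ) ℂ) : Matrix ι ι ℂ :=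
  fun a b => ∑ j : κ, X (a, j) (b, j)

/-- `id_d ⊗ N`, applying `N` to each `d × d` block. -/
def idTensor (d : ℕ) {ι κ : Type*}
    (N : Matrix ι ι ℂ → Matrix κ κ ℂ)
    (X : Matrix (Fin d × ι) (Fin d × ι) ℂ) : Matrix (Fin d × κ) (Fin d × κ) ℂ :=
  fun pq rs => N (fun u v => X (pq.1, u) (rs.1, v)) pq.2 rs.2

/-- The product-state classical capacity with `d`-dimensional entanglement assistance,
`C_prod^d(N) = sup { S(∑ λ_i N((tr_d ⊗ id)(ρ_i))) + ∑ λ_i [S((id ⊗ tr)(ρ_i)) − S((id_d ⊗ N)(ρ_i))] }`,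
the supremum running over finite ensembles of states `ρ_i` on `ℂ^d ⊗ ℂ^n`. -/
def Cprod (d : ℕ) {ι κ : Type*} [Fintype ι] [DecidableEq ι] [Fintype κ] [DecidableEq κ]
    (N : Matrix ι ι ℂ → Matrix κ κ ℂ) : ℝ :=
  sSup { r : ℝ | ∃ (k : ℕ) (w : Fin k → ℝ) (ρ : Fin k → Matrix (Fin d × ι) (Fin d × ι) ℂ),
    (∀ i, 0 ≤ w i) ∧ (∑ i, w i = 1) ∧
    (∀ i, (ρ i).PosSemidef ∧ Matrix.trace (ρ i) = 1) ∧
    r = entropy2 (∑ i, w i • N (ptrace1 (ρ i))) +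
        ∑ i, w i * (entropy2 (ptrace2 (ρ i)) - entropy2 (idTensor d N (ρ i))) }

/-- The quantum depolarizing channel `D_λ(ρ) = λρ + (1−λ)(tr(ρ)/n) I_n`. -/
def depol (n : ℕ) (lam : ℝ) (ρ : Matrix (Fin n) (Fin n) ℂ) : Matrix (Fin n) (Fin n) ℂ :=
  (lam : ℂ) • ρ + (((1 - lam) / n : ℝ) : ℂ) • Matrix.trace ρ • (1 : Matrix (Fin n) (Fin n) ℂ)

/-- The quantum erasure channel `E_λ : M_n → M_{n+1}`,
`E_λ(ρ) = block-diag(λρ, (1−λ)tr(ρ))`. -/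
def erasure (n : ℕ) (lam : ℝ) (ρ : Matrix (Fin n) (Fin n) ℂ) :
    Matrix (Fin (n + 1)) (Fin (n + 1)) ℂ :=
  fun a b =>
    if ha : (a : ℕ) < n then
      if hb : (b : ℕ) < n then (lam : ℂ) * ρ ⟨a, ha⟩ ⟨b, hb⟩ else 0
    else if (b : ℕ) < n then 0 else ((1 - lam : ℝ) : ℂ) * Matrix.trace ρ

open scoped Kronecker

lemma ent_two {ι : Type*} [Fintype ι] [DecidableEq ι] (A : Matrix ι ι ℂ) (hA : A.IsHermitian)
    (c m : ℝ) (hq : (A - (c : ℂ) • 1) * (A - (m : ℂ) • 1) = 0)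
    (ht : A.trace = (((Fintype.card ι : ℝ) * c + (m - c) : ℝ) : ℂ)) :
    entropy2 A = -(((Fintype.card ι : ℝ) - 1) * (c * Real.logb 2 c) + m * Real.logb 2 m) := by
  have hev : ∀ i, hA.eigenvalues i = c ∨ hA.eigenvalues i = m := by
    intro i
    have h1 := hA.mulVec_eigenvectorBasis i
    set v : ι → ℂ := ⇑(hA.eigenvectorBasis i) with hv
    have hv0 : v ≠ 0 := by
      intro h0
      apply hA.eigenvectorBasis.orthonormal.ne_zero i
      ext j
      exact congrFun h0 j
    set e := hA.eigenvalues i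
    have h1' : A *ᵥ v = (e : ℂ) • v := by
      rw [h1]; ext j; simp
    have h2 : ((A - (c : ℂ) • 1) * (A - (m : ℂ) • 1)) *ᵥ v
        = (((e : ℂ) - c) * ((e : ℂ) - m)) • v := by
      rw [← Matrix.mulVec_mulVec]
      have : (A - (m : ℂ) • 1) *ᵥ v = ((e : ℂ) - m) • v := by
        rw [Matrix.sub_mulVec, h1', Matrix.smul_mulVec, Matrix.one_mulVec, sub_smul]
      rw [this, Matrix.mulVec_smul, Matrix.sub_mulVec, h1', Matrix.smul_mulVec, Matrix.one_mulVec,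
        ← sub_smul, smul_smul, mul_comm]
    rw [hq, Matrix.zero_mulVec] at h2
    rcases smul_eq_zero.1 h2.symm with h | h
    · rcases mul_eq_zero.1 h with h | h
      · left; exact_mod_cast sub_eq_zero.1 h
      · right; exact_mod_cast sub_eq_zero.1 h
    · exact absurd h hv0
  have hs : ∑ i, hA.eigenvalues i = (Fintype.card ι : ℝ) * c + (m - c) := by
    have := hA.trace_eq_sum_eigenvalues
    rw [ht] at this
    have h2 := congrArg Complex.re this
    simpa using h2.symm
  unfold entropy2
  rw [dif_pos hA]
  congr 1
  by_cases hcm : m = c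
  · subst hcm
    have : ∀ i, hA.eigenvalues i = m := fun i => (hev i).elim id id
    simp only [this, Finset.sum_const, Finset.card_univ, nsmul_eq_mul]
    ring
  · have hne : m - c ≠ 0 := sub_ne_zero.2 hcm
    have : ∀ i, hA.eigenvalues i * Real.logb 2 (hA.eigenvalues i) =
        c * Real.logb 2 c + (hA.eigenvalues i - c) *
          ((m * Real.logb 2 m - c * Real.logb 2 c) / (m - c)) := by
      intro i
      rcases hev i with h | h
      · rw [h]; ring
      · rw [h]; field_simp; ring
    rw [Finset.sum_congr rfl fun i _ => this i, Finset.sum_add_distrib,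
      ← Finset.sum_mul (f := fun i => hA.eigenvalues i - c), Finset.sum_sub_distrib, hs]
    simp only [Finset.sum_const, Finset.card_univ, nsmul_eq_mul]
    field_simp
    ring

lemma ent_le {ι : Type*} [Fintype ι] [DecidableEq ι] (A : Matrix ι ι ℂ) (hA : A.PosSemidef) :
    entropy2 A ≤ (Fintype.card ι : ℝ) / Real.log 2 := by
  have hl : 0 < Real.log 2 := Real.log_pos (by norm_num)
  unfold entropy2
  rw [dif_pos hA.1, ← Finset.sum_neg_distrib]
  calc _ ≤ ∑ _i : ι, 1 / Real.log 2 := by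
        apply Finset.sum_le_sum
        intro i _
        have h0 := hA.eigenvalues_nonneg i
        set x := hA.1.eigenvalues i
        rw [Real.logb, ← mul_div_assoc, ← neg_div]
        apply div_le_div_of_nonneg_right _ hl.le
        rcases h0.eq_or_lt with h | h
        · rw [← h]; simp
        · have := Real.one_sub_inv_le_log_of_pos h
          have h2 : x * (1 - x⁻¹) ≤ x * Real.log x := mul_le_mul_of_nonneg_left this h0
          rw [mul_sub, mul_inv_cancel₀ h.ne'] at h2
          linarith
    _ = _ := by simp [div_eq_mul_inv]

lemma ent_nonneg {ι : Type*} [Fintype ι] [DecidableEq ι] (A : Matrix ι ι ℂ) (hA : A.PosSemidef)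
    (ht : A.trace = 1) : 0 ≤ entropy2 A := by
  have hs : ∑ i, hA.1.eigenvalues i = 1 := by
    have := hA.1.trace_eq_sum_eigenvalues
    rw [ht] at this
    have h2 := congrArg Complex.re this
    simpa using h2.symm
  unfold entropy2
  rw [dif_pos hA.1, ← Finset.sum_neg_distrib]
  apply Finset.sum_nonneg
  intro i _
  have h0 := hA.eigenvalues_nonneg i
  have h1 : hA.1.eigenvalues i ≤ 1 := by
    rw [← hs]
    exact Finset.single_le_sum (fun j _ => hA.eigenvalues_nonneg j) (Finset.mem_univ i)
  have := Real.logb_nonpos (b := 2) (by norm_num) h0 h1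
  nlinarith

lemma ptrace1_psd {ι κ : Type*} [Fintype ι] (X : Matrix (ι × κ) (ι × κ) ℂ) (hX : X.PosSemidef) :
    (ptrace1 X).PosSemidef := by
  have : ptrace1 X = ∑ a : ι, X.submatrix (fun u => (a, u)) (fun u => (a, u)) := by
    ext u v; simp [ptrace1, Matrix.sum_apply]
  rw [this]
  exact Matrix.posSemidef_sum _ fun a _ => hX.submatrix _

lemma ptrace2_psd {ι κ : Type*} [Fintype κ] (X : Matrix (ι × κ) (ι × κ) ℂ) (hX : X.PosSemidef) :
    (ptrace2 X).PosSemidef := by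
  have : ptrace2 X = ∑ a : κ, X.submatrix (fun u => (u, a)) (fun u => (u, a)) := by
    ext u v; simp [ptrace2, Matrix.sum_apply]
  rw [this]
  exact Matrix.posSemidef_sum _ fun a _ => hX.submatrix _

lemma trace_ptrace1 {ι κ : Type*} [Fintype ι] [Fintype κ] (X : Matrix (ι × κ) (ι × κ) ℂ) :
    (ptrace1 X).trace = X.trace := by
  simp only [Matrix.trace, Matrix.diag, ptrace1, Fintype.sum_prod_type]
  exact Finset.sum_comm

lemma trace_ptrace2 {ι κ : Type*} [Fintype ι] [Fintype κ] (X : Matrix (ι × κ) (ι × κ) ℂ) :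
    (ptrace2 X).trace = X.trace := by
  simp only [Matrix.trace, Matrix.diag, ptrace2, Fintype.sum_prod_type]

lemma idTensor_depol (n d : ℕ) (lam : ℝ) (X : Matrix (Fin d × Fin n) (Fin d × Fin n) ℂ) :
    idTensor d (depol n lam) X =
      (lam : ℂ) • X + (((1 - lam) / n : ℝ) : ℂ) • (ptrace2 X ⊗ₖ (1 : Matrix (Fin n) (Fin n) ℂ)) := by
  ext ⟨a, j⟩ ⟨b, k⟩
  simp [idTensor, depol, ptrace2, Matrix.trace]
  rfl

lemma psd_rsmul {ι : Type*} (A : Matrix ι ι ℂ) (hA : A.PosSemidef) (w : ℝ) (hw : 0 ≤ w) :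
    ((w : ℂ) • A).PosSemidef := hA.smul (by exact_mod_cast hw)

lemma bdd (n d : ℕ) (hn : 1 ≤ n) (lam : ℝ) (hl0 : 0 ≤ lam) (hl1 : lam ≤ 1) :
    BddAbove { r : ℝ | ∃ (k : ℕ) (w : Fin k → ℝ)
      (ρ : Fin k → Matrix (Fin d × Fin n) (Fin d × Fin n) ℂ),
    (∀ i, 0 ≤ w i) ∧ (∑ i, w i = 1) ∧
    (∀ i, (ρ i).PosSemidef ∧ Matrix.trace (ρ i) = 1) ∧
    r = entropy2 (∑ i, w i • depol n lam (ptrace1 (ρ i))) +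
        ∑ i, w i * (entropy2 (ptrace2 (ρ i)) - entropy2 (idTensor d (depol n lam) (ρ i))) } := by
  refine ⟨(n : ℝ) / Real.log 2 + (d : ℝ) / Real.log 2, ?_⟩
  rintro r ⟨k, w, ρ, hw, hw1, hρ, rfl⟩
  have hc : 0 ≤ (1 - lam) / (n : ℝ) := div_nonneg (by linarith) (by positivity)
  have hn0 : (n : ℂ) ≠ 0 := by exact_mod_cast (by omega : n ≠ 0)
  apply add_le_add
  · have := ent_le (∑ i, w i • depol n lam (ptrace1 (ρ i))) ?_
    · simpa using this
    · refine Matrix.posSemidef_sum _ fun i _ => ?_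
      have : w i • depol n lam (ptrace1 (ρ i)) = (w i : ℂ) • depol n lam (ptrace1 (ρ i)) := by
        ext; simp
      rw [this]
      refine psd_rsmul _ ?_ _ (hw i)
      unfold depol
      rw [trace_ptrace1, (hρ i).2, one_smul]
      exact (psd_rsmul _ (ptrace1_psd _ (hρ i).1) _ hl0).add (psd_rsmul _ Matrix.PosSemidef.one _ hc)
  · calc _ ≤ ∑ i, w i * ((d : ℝ) / Real.log 2) := by
          apply Finset.sum_le_sum
          intro i _
          apply mul_le_mul_of_nonneg_left _ (hw i)
          have h1 := ent_le _ (ptrace2_psd _ (hρ i).1)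
          have h2 := ent_nonneg (idTensor d (depol n lam) (ρ i)) ?_ ?_
          · simp only [Fintype.card_fin] at h1
            linarith
          · rw [idTensor_depol]
            exact (psd_rsmul _ (hρ i).1 _ hl0).add
              (psd_rsmul _ ((ptrace2_psd _ (hρ i).1).kronecker Matrix.PosSemidef.one) _ hc)
          · rw [idTensor_depol, Matrix.trace_add, Matrix.trace_smul, Matrix.trace_smul,
              Matrix.trace_kronecker, trace_ptrace2, (hρ i).2]
            simp [hn0]
      _ = _ := by rw [← Finset.sum_mul, hw1, one_mul]

/-- The shift `a ↦ a + s` from `Fin d` into `Fin n`. -/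
def shf (n d : ℕ) [NeZero n] (hdn : d ≤ n) (s : Fin n) (a : Fin d) : Fin n := Fin.castLE hdn a + s

/-- Unnormalized maximally entangled vector. -/
def mev (n d : ℕ) [NeZero n] (hdn : d ≤ n) (s : Fin n) (p : Fin d × Fin n) : ℂ :=
  if p.2 = shf n d hdn s p.1 then 1 else 0

/-- Maximally entangled state. -/
def mes (n d : ℕ) [NeZero n] (hdn : d ≤ n) (s : Fin n) :
    Matrix (Fin d × Fin n) (Fin d × Fin n) ℂ :=
  (((1 : ℝ) / d : ℝ) : ℂ) • Matrix.vecMulVec (mev n d hdn s) (star (mev n d hdn s))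

lemma mev_dot (n d : ℕ) [NeZero n] (hdn : d ≤ n) (s : Fin n) :
    star (mev n d hdn s) ⬝ᵥ mev n d hdn s = d := by
  simp [dotProduct, mev, Fintype.sum_prod_type, apply_ite]

lemma mes_psd (n d : ℕ) [NeZero n] (hdn : d ≤ n) (s : Fin n) : (mes n d hdn s).PosSemidef :=
  psd_rsmul _ (Matrix.posSemidef_vecMulVec_self_star _) _ (by positivity)

lemma mes_trace (n d : ℕ) [NeZero n] (hd : 1 ≤ d) (hdn : d ≤ n) (s : Fin n) :
    (mes n d hdn s).trace = 1 := by
  have hd0 : (d : ℂ) ≠ 0 := by exact_mod_cast (by omega : d ≠ 0)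
  rw [mes, Matrix.trace_smul, Matrix.trace_vecMulVec, dotProduct_comm, mev_dot]
  simp [hd0]

lemma mes_sq (n d : ℕ) [NeZero n] (hd : 1 ≤ d) (hdn : d ≤ n) (s : Fin n) :
    mes n d hdn s * mes n d hdn s = mes n d hdn s := by
  have hd0 : (d : ℂ) ≠ 0 := by exact_mod_cast (by omega : d ≠ 0)
  rw [mes, Matrix.smul_mul, Matrix.mul_smul, Matrix.vecMulVec_mul_vecMulVec, mev_dot]
  ext p q
  simp [Matrix.vecMulVec_apply, hd0]

lemma mes_ptrace2 (n d : ℕ) [NeZero n] (hdn : d ≤ n) (s : Fin n) :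
    ptrace2 (mes n d hdn s) = (((1 : ℝ) / d : ℝ) : ℂ) • 1 := by
  ext a b
  have h : (shf n d hdn s b = shf n d hdn s a) ↔ a = b := by
    rw [eq_comm]
    simp [shf]
  simp only [ptrace2, mes, mev, Matrix.vecMulVec_apply, Matrix.one_apply, Matrix.smul_apply,
    Pi.star_apply, apply_ite star, star_one, star_zero, ite_mul, one_mul, zero_mul, smul_eq_mul,
    mul_ite, mul_zero, Finset.sum_ite_eq', Finset.mem_univ, if_true, h]

lemma mes_avg (n d : ℕ) [NeZero n] (hd : 1 ≤ d) (hdn : d ≤ n) :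
    ∑ s, ptrace1 (mes n d hdn s) = 1 := by
  have hd0 : (d : ℂ) ≠ 0 := by exact_mod_cast (by omega : d ≠ 0)
  ext u v
  rw [Matrix.sum_apply]
  simp only [ptrace1]
  rw [Finset.sum_comm]
  have h : ∀ (a : Fin d) (s : Fin n), mes n d hdn s (a, u) (a, v)
      = if s = u - Fin.castLE hdn a then (if u = v then ((1 : ℂ) / d) else 0) else 0 := by
    intro a s
    have e1 : (u = shf n d hdn s a) ↔ s = u - Fin.castLE hdn a := by
      rw [shf, eq_sub_iff_add_eq', eq_comm]
    simp only [mes, mev, Matrix.vecMulVec_apply, Matrix.smul_apply, Pi.star_apply]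
    by_cases hs : s = u - Fin.castLE hdn a
    · have h2 := e1.2 hs
      rw [if_pos hs, ← h2]
      by_cases huv : u = v
      · simp [huv]
      · simp [huv, Ne.symm huv]
    · have h2 := mt e1.1 hs
      simp [h2, hs]
  simp only [h, Finset.sum_ite_eq', Finset.mem_univ, if_true]
  simp [Matrix.one_apply, hd0]

lemma value (n d : ℕ) (hd : 1 ≤ d) (hdn : d ≤ n) (lam : ℝ) (hl0 : 0 ≤ lam) (hl1 : lam ≤ 1) :
    Real.logb 2 n + (Real.logb 2 d +
      (((n : ℝ) * d - 1) * ((1 - lam) / (n * d) * Real.logb 2 ((1 - lam) / (n * d))) +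
        (lam + (1 - lam) / (n * d)) * Real.logb 2 (lam + (1 - lam) / (n * d))))
      ≤ Cprod d (depol n lam) := by
  have hn : 1 ≤ n := hd.trans hdn
  have : NeZero n := ⟨by omega⟩
  have hn0 : (n : ℝ) ≠ 0 := by exact_mod_cast (by omega : n ≠ 0)
  have hd0 : (d : ℝ) ≠ 0 := by exact_mod_cast (by omega : d ≠ 0)
  have hn0' : (n : ℂ) ≠ 0 := by exact_mod_cast (by omega : n ≠ 0)
  have hd0' : (d : ℂ) ≠ 0 := by exact_mod_cast (by omega : d ≠ 0)
  apply le_csSup (bdd n d hn lam hl0 hl1)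
  refine ⟨n, fun _ => 1 / n, mes n d hdn, fun _ => by positivity, by simp [hn0],
    fun s => ⟨mes_psd n d hdn s, mes_trace n d hd hdn s⟩, ?_⟩
  have hscal : ∀ (m : ℕ), (m : ℝ) ≠ 0 →
      entropy2 ((((1 : ℝ) / m : ℝ) : ℂ) • (1 : Matrix (Fin m) (Fin m) ℂ)) = Real.logb 2 m := by
    intro m hm
    rw [ent_two _ (psd_rsmul _ Matrix.PosSemidef.one _ (by positivity)).1 (1 / m) (1 / m)
      (by simp) (by simp [mul_comm])]
    simp only [Fintype.card_fin, one_div, Real.logb_inv]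
    field_simp
    ring
  have e1 : ∑ s, ((1 : ℝ) / n) • depol n lam (ptrace1 (mes n d hdn s))
      = (((1 : ℝ) / n : ℝ) : ℂ) • (1 : Matrix (Fin n) (Fin n) ℂ) := by
    rw [← Finset.smul_sum]
    have : ∑ s, depol n lam (ptrace1 (mes n d hdn s)) = 1 := by
      simp only [depol, trace_ptrace1, mes_trace n d hd hdn, one_smul]
      rw [Finset.sum_add_distrib, ← Finset.smul_sum, mes_avg n d hd hdn, Finset.sum_const,
        Finset.card_univ, Fintype.card_fin, ← Nat.cast_smul_eq_nsmul ℂ, smul_smul, ← add_smul]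
      have : (lam : ℂ) + (n : ℂ) * (((1 - lam) / n : ℝ) : ℂ) = 1 := by
        push_cast; field_simp; ring
      rw [this, one_smul]
    rw [this]
    ext; simp
  have e3 : ∀ s, entropy2 (idTensor d (depol n lam) (mes n d hdn s)) =
      -(((n : ℝ) * d - 1) * ((1 - lam) / (n * d) * Real.logb 2 ((1 - lam) / (n * d))) +
        (lam + (1 - lam) / (n * d)) * Real.logb 2 (lam + (1 - lam) / (n * d))) := by
    intro s
    have hA : idTensor d (depol n lam) (mes n d hdn s) =
        (lam : ℂ) • mes n d hdn s + (((1 - lam) / (n * d) : ℝ) : ℂ) • 1 := by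
      rw [idTensor_depol, mes_ptrace2, Matrix.smul_kronecker, Matrix.one_kronecker_one, smul_smul]
      congr 2
      push_cast; field_simp
    have hc : 0 ≤ (1 - lam) / ((n : ℝ) * d) := div_nonneg (by linarith) (by positivity)
    rw [hA, ent_two _ ((psd_rsmul _ (mes_psd n d hdn s) _ hl0).add
      (psd_rsmul _ Matrix.PosSemidef.one _ hc)).1 ((1 - lam) / (n * d))
        (lam + (1 - lam) / (n * d))]
    · simp only [Fintype.card_prod, Fintype.card_fin, Nat.cast_mul]
      rw [mul_comm (d : ℝ) n]
    · have h1 : (lam : ℂ) • mes n d hdn s + (((1 - lam) / (n * d) : ℝ) : ℂ) • 1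
          - ((lam + (1 - lam) / (n * d) : ℝ) : ℂ) • 1
          = (lam : ℂ) • (mes n d hdn s - 1) := by
        rw [Complex.ofReal_add, add_smul, smul_sub]; abel
      rw [add_sub_cancel_right, h1, Matrix.smul_mul, Matrix.mul_smul, mul_sub, mes_sq n d hd hdn]
      simp
    · rw [Matrix.trace_add, Matrix.trace_smul, Matrix.trace_smul, mes_trace n d hd hdn]
      simp
      ring
  simp only [e1, e3, mes_ptrace2, hscal n hn0, hscal d hd0]
  simp [Finset.sum_const, hn0]
  ring

/-- lower bound for the `d`-restricted product-state capacity of the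
depolarizing channel: `λ log₂(nd) − H(μ) ≤ C_prod^d(D_λ)` with `μ = λ + (1−λ)/(nd)`,
and in particular `λ log₂(nd) − 1 ≤ C_prod^d(D_λ)`. -/
theorem statement14 (n d : ℕ) (hd : 1 ≤ d) (hdn : d ≤ n) (lam : ℝ) (hl0 : 0 ≤ lam)
    (hl1 : lam ≤ 1) :
    (lam * Real.logb 2 ((n : ℝ) * d) -
        (-(lam + (1 - lam) / ((n : ℝ) * d)) * Real.logb 2 (lam + (1 - lam) / ((n : ℝ) * d)) -
          (1 - (lam + (1 - lam) / ((n : ℝ) * d))) *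
            Real.logb 2 (1 - (lam + (1 - lam) / ((n : ℝ) * d)))) ≤
      Cprod d (depol n lam)) ∧
    lam * Real.logb 2 ((n : ℝ) * d) - 1 ≤ Cprod d (depol n lam) := by
  have hn : 1 ≤ n := hd.trans hdn
  have hnd : (1 : ℝ) ≤ (n : ℝ) * d := by exact_mod_cast Nat.mul_pos hn hd
  have hn0 : (n : ℝ) ≠ 0 := by exact_mod_cast (by omega : n ≠ 0)
  have hd0 : (d : ℝ) ≠ 0 := by exact_mod_cast (by omega : d ≠ 0)
  have hv := value n d hd hdn lam hl0 hl1
  rw [← add_assoc, ← Real.logb_mul hn0 hd0] at hv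
  have key : lam * Real.logb 2 ((n : ℝ) * d) -
        (-(lam + (1 - lam) / ((n : ℝ) * d)) * Real.logb 2 (lam + (1 - lam) / ((n : ℝ) * d)) -
          (1 - (lam + (1 - lam) / ((n : ℝ) * d))) *
            Real.logb 2 (1 - (lam + (1 - lam) / ((n : ℝ) * d)))) ≤
      Cprod d (depol n lam) := by
    refine le_trans ?_ hv
    generalize (n : ℝ) * d = N at hnd
    have hN0 : N ≠ 0 := by linarith
    have h1 : 1 - (lam + (1 - lam) / N) = (N - 1) * ((1 - lam) / N) := by
      field_simp; ring
    have hc : 0 ≤ (1 - lam) / N := div_nonneg (by linarith) (by linarith)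
    have hcl : (N - 1) * ((1 - lam) / N) ≤ 1 - lam := by
      have : (N - 1) * ((1 - lam) / N) = (1 - lam) - (1 - lam) / N := by field_simp
      linarith
    rw [h1]
    set c := (1 - lam) / N
    have hL : 0 ≤ Real.logb 2 N := Real.logb_nonneg (by norm_num) hnd
    have h2 : (N - 1) * c * Real.logb 2 ((N - 1) * c) ≤
        (N - 1) * c * Real.logb 2 N + (N - 1) * (c * Real.logb 2 c) := by
      rcases eq_or_lt_of_le hnd with h | h
      · simp [← h]
      rcases eq_or_lt_of_le hc with h' | h'
      · simp [← h']
      rw [Real.logb_mul (by linarith) h'.ne']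
      have h3 : Real.logb 2 (N - 1) ≤ Real.logb 2 N :=
        Real.logb_le_logb_of_le (by norm_num) (by linarith) (by linarith)
      have h4 : 0 ≤ (N - 1) * c := mul_nonneg (by linarith) hc
      have := mul_le_mul_of_nonneg_left h3 h4
      linarith
    have h5 := mul_le_mul_of_nonneg_right hcl hL
    linarith
  refine ⟨key, le_trans ?_ key⟩
  generalize lam + (1 - lam) / ((n : ℝ) * d) = m
  have hb := Real.binEntropy_le_log_two (p := m)
  rw [Real.binEntropy_eq_negMulLog_add_negMulLog_one_sub] at hb
  simp only [Real.negMulLog] at hb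
  have hl : 0 < Real.log 2 := Real.log_pos (by norm_num)
  have : -m * Real.logb 2 m - (1 - m) * Real.logb 2 (1 - m) ≤ 1 := by
    have : -m * Real.logb 2 m - (1 - m) * Real.logb 2 (1 - m) =
        (-m * Real.log m + -(1 - m) * Real.log (1 - m)) / Real.log 2 := by
      simp only [Real.logb]; ring
    rw [this, div_le_one hl]
    exact hb
  linarith
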